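/- For every price bound λ̄ > 0, the simultaneous-move Stackelberg game between the MBS and the FUs with continuous strategies has a pure-strategy equilibrium with finite prices: there exist λ* ∈ [0, λ̄]^K and p* ∈ ∏_k [0, p_k^max] such that (i) Σ_k λ*_k·h_{k,0}·p*_k ≥ Σ_k λ_k·h_{k,0}·p*_k for every λ ∈ [0, λ̄]^K, and (ii) for every k and every p_k ∈ [0, p_k^max], u_k(λ*; p*_k, p*_{-k}) ≥ u_k(λ*; p_k, p*_{-k}). (This is the existence part of Theorem 3, with the MBS price restricted to a compact box.) -/

import Mathlib

open Real Finset

/-- SINR of FU `k`. -/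
noncomputable def sinr {K : ℕ} (hff : Fin K → Fin K → ℝ) (h0f N : Fin K → ℝ)
    (p0 : ℝ) (k : Fin K) (p : Fin K → ℝ) : ℝ :=
  hff k k * p k / (N k + h0f k * p0 + ∑ j ∈ Finset.univ.erase k, hff j k * p j)

/-- Net payoff of FU `k` for prices `lam`. -/
noncomputable def payoff {K : ℕ} (W pa p0 : ℝ) (hff : Fin K → Fin K → ℝ)
    (h0f hf0 N : Fin K → ℝ) (lam : Fin K → ℝ) (k : Fin K) (p : Fin K → ℝ) : ℝ :=
  W * Real.log (1 + sinr hff h0f N p0 k p) / (p k + pa) - lam k * hf0 k * p k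

/-- MBS revenue `u_0(λ, p) = Σ_k λ_k h_{k,0} p_k`. -/
noncomputable def revenue {K : ℕ} (hf0 : Fin K → ℝ) (lam p : Fin K → ℝ) : ℝ :=
  ∑ k, lam k * hf0 k * p k

/-!
The MBS revenue increases with every price, so charging `lambar` to every user is a best response
to any powers, and only a Nash equilibrium of the users at fixed prices is needed. The payoff of a
user is a concave function divided by an affine one, minus a linear cost; it is therefore
pseudoconcave in the user's own power, and a power is a best response as soon as the marginal payoff
satisfies the first-order condition on `[0, pmax k]`. These conditions together form a variational
inequality for a continuous map on a box. Its solutions are the fixed points of the gradient step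
followed by projection to the box, which exist by Brouwer's theorem.

Brouwer's theorem follows from the nonexistence of a `C¹` retraction onto a sphere, by the argument
of Milnor and Rogers. If `g` is `C¹` and vanishes on the boundary of a ball, then for small `t` the
map `x ↦ x + t g(x)` permutes the ball, so the integral of its Jacobian is the volume of the ball.
That integral is a polynomial in `t`, so it is still the volume at `t = 1`. For a retraction
`x + g(x)` onto the sphere, however, the Jacobian vanishes identically.
-/

section Jacobian

open MeasureTheory Filter Topology
open scoped Polynomial NNReal

theorem exists_polynomial_eval_eq_integral {𝕜 α : Type*} [RCLike 𝕜] [MeasurableSpace α]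
    {μ : Measure α} {P : α → 𝕜[X]} {n : ℕ} (hdeg : ∀ a, (P a).natDegree ≤ n)
    (hint : ∀ t, Integrable (fun a => (P a).eval t) μ) :
    ∃ Q : 𝕜[X], ∀ t, Q.eval t = ∫ a, (P a).eval t ∂μ := by
  let nodes := range (n + 1)
  let v : ℕ → 𝕜 := Nat.cast
  have hv : Set.InjOn v nodes := Nat.cast_injective.injOn
  have hcard : ∀ a, (P a).degree < (#nodes : ℕ) := fun a => by
    rw [card_range]
    exact Polynomial.degree_le_natDegree.trans_lt (by exact_mod_cast Nat.lt_succ_of_le (hdeg a))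
  have heval : ∀ a t, (P a).eval t =
      ∑ i ∈ nodes, (P a).eval (v i) * (Lagrange.basis nodes v i).eval t := by
    intro a t
    conv_lhs => rw [Lagrange.eq_interpolate hv (hcard a), Lagrange.interpolate_apply]
    simp only [Polynomial.eval_finsetSum, Polynomial.eval_mul, Polynomial.eval_C]
  refine ⟨Lagrange.interpolate nodes v fun i => ∫ a, (P a).eval (v i) ∂μ, fun t => ?_⟩
  simp only [Lagrange.interpolate_apply, Polynomial.eval_finsetSum, Polynomial.eval_mul,
    Polynomial.eval_C, heval _ t]
  rw [integral_finsetSum _ fun i _ => (hint (v i)).mul_const _]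
  simp only [integral_mul_const]

theorem exists_polynomial_eval_eq_det_add_smul {R M : Type*} [CommRing R] [Nontrivial R]
    [AddCommGroup M] [Module R M] [Module.Free R M] [Module.Finite R M] (A B : Module.End R M) :
    ∃ P : R[X], P.natDegree ≤ Module.finrank R M ∧
      ∀ t, P.eval t = LinearMap.det (A + t • B) := by
  classical
  let b := Module.Free.chooseBasis R M
  let mat := LinearMap.toMatrix b b
  refine ⟨((Polynomial.X : R[X]) • (mat B).map Polynomial.C + (mat A).map Polynomial.C).det,
    ?_, fun t => ?_⟩
  · rw [Module.finrank_eq_card_chooseBasisIndex]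
    exact Polynomial.natDegree_det_X_add_C_le _ _
  · rw [← LinearMap.det_toMatrix b, ← Polynomial.coe_evalRingHom, RingHom.map_det]
    congr 1
    ext i j
    simp [mat]
    ring

theorem bijective_add_of_lipschitzWith_lt_one {E : Type*} [NormedAddCommGroup E] [CompleteSpace E]
    {g : E → E} {L : ℝ≥0} (hg : LipschitzWith L g) (hL : L < 1) :
    Function.Bijective fun x => x + g x := by
  have hcontr : ∀ y, ContractingWith L fun x => y - g x := fun y =>
    ⟨hL, LipschitzWith.of_dist_le_mul fun a b => by
      rw [dist_sub_left]; exact hg.dist_le_mul a b⟩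
  rw [Function.bijective_iff_existsUnique]
  intro y
  refine ⟨(hcontr y).fixedPoint, ?_, fun x hx => (hcontr y).fixedPoint_unique ?_⟩
  · exact eq_sub_iff_add_eq.1 (hcontr y).fixedPoint_isFixedPt.symm
  · exact (eq_sub_iff_add_eq.2 hx).symm

theorem image_eq_self_of_bijective_of_eqOn_compl {α : Type*} {f : α → α} {s : Set α}
    (hf : Function.Bijective f) (hid : Set.EqOn f id sᶜ) : f '' s = s := by
  rw [← compl_inj_iff, ← Set.image_compl_eq hf, hid.image_eq_self]

theorem inter_frontier_nonempty_of_isPreconnected {X : Type*} [TopologicalSpace X] {s t : Set X}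
    (ht : IsPreconnected t) (hts : (t ∩ s).Nonempty) (htsc : (t \ s).Nonempty) :
    (t ∩ frontier s).Nonempty := by
  by_contra hempty
  have hfr : ∀ x ∈ t, x ∉ frontier s := fun x hx hxs => hempty ⟨x, hx, hxs⟩
  obtain ⟨x, hxt, hxs⟩ := hts
  obtain ⟨y, hyt, hys⟩ := htsc
  have hint : ∀ z ∈ t, z ∈ closure s → z ∈ interior s := fun z hz hzc =>
    not_not.1 fun hzi => hfr z hz ⟨hzc, hzi⟩
  obtain ⟨z, -, hzi, hzc⟩ := ht (interior s) (closure s)ᶜ isOpen_interior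
    isClosed_closure.isOpen_compl (fun z hz => or_iff_not_imp_right.2 fun hzc =>
      hint z hz (not_not.1 hzc))
    ⟨x, hxt, hint x hxt (subset_closure hxs)⟩
    ⟨y, hyt, fun hyc => hys (interior_subset (hint y hyt hyc))⟩
  exact hzc (subset_closure (interior_subset hzi))

theorem lipschitzWith_indicator_of_frontier {E F : Type*} [SeminormedAddCommGroup E]
    [NormedSpace ℝ E] [SeminormedAddCommGroup F] {g : E → F} {L : ℝ≥0} {s : Set E}
    (hs : IsClosed s) (hg : LipschitzOnWith L g s) (hfr : ∀ x ∈ frontier s, g x = 0) :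
    LipschitzWith L (s.indicator g) := by
  have hcross : ∀ x ∈ s, ∀ y ∉ s, dist (g x) 0 ≤ L * dist x y := by
    intro x hx y hy
    obtain ⟨z, hzseg, hzfr⟩ := inter_frontier_nonempty_of_isPreconnected
      (convex_segment (𝕜 := ℝ) x y).isPreconnected
      ⟨x, left_mem_segment ℝ x y, hx⟩ ⟨y, right_mem_segment ℝ x y, hy⟩
    have hdist : dist x z ≤ dist x y := by
      linarith [dist_add_dist_of_mem_segment hzseg, dist_nonneg (x := z) (y := y)]
    calc dist (g x) 0 = dist (g x) (g z) := by rw [hfr z hzfr]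
      _ ≤ L * dist x z := hg.dist_le_mul x hx z (hs.frontier_subset hzfr)
      _ ≤ L * dist x y := by gcongr
  refine LipschitzWith.of_dist_le_mul fun x y => ?_
  by_cases hx : x ∈ s <;> by_cases hy : y ∈ s <;>
    simp only [hx, hy, Set.indicator_of_mem, Set.indicator_of_notMem, not_false_eq_true]
  · exact hg.dist_le_mul x hx y hy
  · exact hcross x hx y hy
  · rw [dist_comm, dist_comm x]
    exact hcross y hy x hx
  · rw [dist_self]
    positivity

variable {E : Type*} [NormedAddCommGroup E] [NormedSpace ℝ E]

theorem eventually_bijOn_add_smul_of_frontier [CompleteSpace E] {g : E → E} {L : ℝ≥0} {s : Set E}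
    (hs : IsClosed s) (hg : LipschitzOnWith L g s) (hfr : ∀ x ∈ frontier s, g x = 0) :
    ∀ᶠ t : ℝ in 𝓝 0, Set.BijOn (fun x => x + t • g x) s s := by
  have hlip := lipschitzWith_indicator_of_frontier hs hg hfr
  have hsmall : ∀ᶠ t : ℝ in 𝓝 0, ‖t‖₊ * L < 1 :=
    ((continuous_nnnorm.mul continuous_const).tendsto' 0 0 (by simp)).eventually_lt_const one_pos
  filter_upwards [hsmall] with t ht
  have hbij := bijective_add_of_lipschitzWith_lt_one ((lipschitzWith_smul t).comp hlip) ht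
  have heq : Set.EqOn (fun x => x + t • s.indicator g x) (fun x => x + t • g x) s := fun x hx => by
    simp only [Set.indicator_of_mem hx]
  have himage := image_eq_self_of_bijective_of_eqOn_compl (s := s) hbij fun x hx => by
    simp [Set.indicator_of_notMem hx]
  exact (himage ▸ hbij.injective.injOn.bijOn_image).congr heq

theorem eventually_forall_mem_det_id_add_smul_pos {X : Type*} [TopologicalSpace X] {s : Set X}
    {A : X → E →L[ℝ] E} (hA : Continuous A) (hs : IsCompact s) :
    ∀ᶠ t : ℝ in 𝓝 0, ∀ x ∈ s, 0 < (ContinuousLinearMap.id ℝ E + t • A x).det := by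
  refine hs.eventually_forall_of_forall_eventually fun x _ => ?_
  have hcont : Continuous fun z : ℝ × X =>
      (ContinuousLinearMap.id ℝ E + z.1 • A z.2).det :=
    ContinuousLinearMap.continuous_det.comp (by fun_prop)
  refine hcont.continuousAt.eventually_const_lt ?_
  simp [ContinuousLinearMap.det]

variable [FiniteDimensional ℝ E] [MeasurableSpace E] [BorelSpace E] (μ : Measure E)
  [μ.IsAddHaarMeasure] {g : E → E} {s : Set E}

theorem eventually_setIntegral_det_id_add_smul_fderiv (hg : ContDiff ℝ 1 g) (hs : IsCompact s)
    (hconv : Convex ℝ s) (hfr : ∀ x ∈ frontier s, g x = 0) :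
    ∀ᶠ t : ℝ in 𝓝 0,
      ∫ x in s, (ContinuousLinearMap.id ℝ E + t • fderiv ℝ g x).det ∂μ = μ.real s := by
  obtain ⟨L, hL⟩ := hg.contDiffOn.exists_lipschitzOnWith one_ne_zero hconv hs
  filter_upwards [eventually_bijOn_add_smul_of_frontier hs.isClosed hL hfr,
    eventually_forall_mem_det_id_add_smul_pos (hg.continuous_fderiv one_ne_zero) hs]
    with t hbij hpos
  have hderiv : ∀ x ∈ s, HasFDerivWithinAt (fun x => x + t • g x)
      (ContinuousLinearMap.id ℝ E + t • fderiv ℝ g x) s x := fun x _ =>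
    ((hasFDerivAt_id x).add
      ((hg.differentiable one_ne_zero x).hasFDerivAt.const_smul t)).hasFDerivWithinAt
  have hchange := integral_image_eq_integral_abs_det_fderiv_smul μ hs.measurableSet hderiv
    hbij.injOn fun _ => (1 : ℝ)
  rw [hbij.image_eq, setIntegral_const] at hchange
  simp only [smul_eq_mul, mul_one] at hchange
  rw [hchange]
  exact setIntegral_congr_fun hs.measurableSet fun x hx => (abs_of_pos (hpos x hx)).symm

-- With `t • g` in place of `g` the left side is a polynomial in `t` that is constant near `t = 0`.
theorem setIntegral_det_id_add_fderiv (hg : ContDiff ℝ 1 g) (hs : IsCompact s)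
    (hconv : Convex ℝ s) (hfr : ∀ x ∈ frontier s, g x = 0) :
    ∫ x in s, (ContinuousLinearMap.id ℝ E + fderiv ℝ g x).det ∂μ = μ.real s := by
  have hfderiv := hg.continuous_fderiv one_ne_zero
  choose P hdeg hP using fun x => exists_polynomial_eval_eq_det_add_smul
    (LinearMap.id : E →ₗ[ℝ] E) (fderiv ℝ g x : E →ₗ[ℝ] E)
  have hPdet : ∀ x t, (P x).eval t = (ContinuousLinearMap.id ℝ E + t • fderiv ℝ g x).det := hP
  have hint : ∀ t, IntegrableOn (fun x => (P x).eval t) s μ := fun t => by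
    simp only [hPdet]
    exact (ContinuousLinearMap.continuous_det.comp (continuous_const.add
      (hfderiv.const_smul t))).continuousOn.integrableOn_compact hs
  obtain ⟨Q, hQ⟩ := exists_polynomial_eval_eq_integral hdeg hint
  simp only [hPdet] at hQ
  have hconst : Q = Polynomial.C (μ.real s) := by
    refine Polynomial.eq_of_infinite_eval_eq _ _ (infinite_of_mem_nhds 0 ?_)
    filter_upwards [eventually_setIntegral_det_id_add_smul_fderiv μ hg hs hconv hfr] with t ht
    rw [hQ, ht, Polynomial.eval_C]
  simpa [hconst] using (hQ 1).symm

end Jacobian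

section FixedPoint

open MeasureTheory Topology

variable {E : Type*} [NormedAddCommGroup E] [InnerProductSpace ℝ E]

theorem det_eq_zero_of_hasFDerivAt_of_norm_eq [FiniteDimensional ℝ E] {r : E → E}
    {r' : E →L[ℝ] E} {x : E} {c : ℝ} (hr : HasFDerivAt r r' x) (hc : c ≠ 0)
    (hnorm : ∀ᶠ y in 𝓝 x, ‖r y‖ = c) : r'.det = 0 := by
  by_contra hdet
  have horth : ∀ v, inner ℝ (r x) (r' v) = 0 := fun v => by
    have hsq : HasFDerivAt (fun y => ‖r y‖ ^ 2) (0 : E →L[ℝ] ℝ) x :=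
      (hasFDerivAt_const (c ^ 2) x).congr_of_eventuallyEq (hnorm.mono fun y hy => by simp only [hy])
    simpa using DFunLike.congr_fun (hr.norm_sq.unique hsq) v
  let e := LinearMap.equivOfDetNeZero (r' : E →ₗ[ℝ] E) hdet
  have hself := horth (e.symm (r x))
  rw [show r' (e.symm (r x)) = r x from e.apply_symm_apply (r x), inner_self_eq_zero,
    ← norm_eq_zero, hnorm.self_of_nhds] at hself
  exact hc hself

theorem not_exists_contDiff_retraction_sphere [FiniteDimensional ℝ E] {R : ℝ} (hR : 0 < R) :
    ¬ ∃ r : E → E, ContDiff ℝ 1 r ∧ (∀ x, ‖r x‖ = R) ∧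
      ∀ x ∈ Metric.sphere 0 R, r x = x := by
  rintro ⟨r, hr, hnorm, hfix⟩
  borelize E
  have hdet : ∀ x, (ContinuousLinearMap.id ℝ E + fderiv ℝ (fun x => r x - x) x).det = 0 := by
    intro x
    have hderiv := (hr.differentiable one_ne_zero x).hasFDerivAt
    have hsub : fderiv ℝ (fun x => r x - x) x = fderiv ℝ r x - ContinuousLinearMap.id ℝ E :=
      (hderiv.sub (hasFDerivAt_id x)).fderiv
    rw [hsub, add_sub_cancel]
    exact det_eq_zero_of_hasFDerivAt_of_norm_eq hderiv hR.ne' (.of_forall hnorm)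
  have hvolume := setIntegral_det_id_add_fderiv volume (hr.sub contDiff_id)
    (isCompact_closedBall (0 : E) R) (convex_closedBall 0 R) fun x hx => by
      rw [frontier_closedBall 0 hR.ne'] at hx
      exact sub_eq_zero.2 (hfix x hx)
  simp only [id_eq, hdet, integral_zero] at hvolume
  exact (ENNReal.toReal_pos (Metric.measure_closedBall_pos volume (0 : E) hR).ne'
    measure_closedBall_lt_top.ne).ne hvolume

theorem exists_isFixedPt_of_contDiff_of_hasCompactSupport [FiniteDimensional ℝ E] {f : E → E}
    (hf : ContDiff ℝ 1 f) (hsupp : HasCompactSupport f) : ∃ x, Function.IsFixedPt f x := by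
  by_contra! hcon
  obtain ⟨R, hR, hRsupp⟩ := hsupp.exists_pos_le_norm
  have hne : ∀ x, x - f x ≠ 0 := fun x hx => hcon x (sub_eq_zero.1 hx).symm
  have hsmooth : ContDiff ℝ 1 fun x => x - f x := contDiff_id.sub hf
  refine not_exists_contDiff_retraction_sphere (E := E) hR
    ⟨fun x => (R * ‖x - f x‖⁻¹) • (x - f x), ?_, fun x => ?_, fun x hx => ?_⟩
  · exact (contDiff_const.mul
      ((hsmooth.norm ℝ hne).inv fun x => norm_ne_zero_iff.2 (hne x))).smul hsmooth
  · rw [norm_smul, norm_mul, norm_inv, norm_norm, mul_assoc,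
      inv_mul_cancel₀ (norm_ne_zero_iff.2 (hne x)), mul_one, Real.norm_of_nonneg hR.le]
  · rw [mem_sphere_zero_iff_norm] at hx
    simp [hRsupp x hx.ge, hx, hR.ne']

theorem exists_isFixedPt_of_hasCompactSupport [FiniteDimensional ℝ E] {f : E → E}
    (hf : Continuous f) (hsupp : HasCompactSupport f) : ∃ x, Function.IsFixedPt f x := by
  let K := insert 0 (tsupport f)
  have hK : IsCompact K := hsupp.isCompact.insert 0
  have happrox : ∀ ε > 0, ∃ x ∈ K, ‖f x - x‖ < ε := by
    intro ε hε
    obtain ⟨g, hg, hgf, hgsupp⟩ := hf.exists_contDiff_approx 1 continuous_const fun _ => hε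
    obtain ⟨x, hx⟩ := exists_isFixedPt_of_contDiff_of_hasCompactSupport (by exact_mod_cast hg)
      (hsupp.mono hgsupp)
    refine ⟨x, ?_, ?_⟩
    · rcases eq_or_ne x 0 with h0 | h0
      · exact Or.inl h0
      · exact Or.inr (subset_tsupport f (hgsupp (by rwa [Function.mem_support, hx.eq])))
    · simpa [hx.eq, dist_eq_norm_sub'] using hgf x
  obtain ⟨x, -, hmin⟩ := hK.exists_isMinOn ⟨0, Or.inl rfl⟩
    (f := fun x => ‖f x - x‖) (by fun_prop)
  refine ⟨x, of_not_not fun hne => ?_⟩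
  obtain ⟨y, hy, hlt⟩ := happrox ‖f x - x‖ (norm_pos_iff.2 (sub_ne_zero.2 hne))
  exact hlt.not_ge (hmin hy)

theorem exists_isFixedPt_of_continuous_of_norm_le [FiniteDimensional ℝ E] {f : E → E} {M : ℝ}
    (hf : Continuous f) (hM : ∀ x, ‖f x‖ ≤ M) : ∃ x, Function.IsFixedPt f x := by
  have hM0 : 0 ≤ M := (norm_nonneg _).trans (hM 0)
  let χ : ContDiffBump (0 : E) := ⟨M + 1, M + 2, by linarith, by linarith⟩
  obtain ⟨x, hx⟩ := exists_isFixedPt_of_hasCompactSupport (χ.continuous.smul hf)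
    (χ.hasCompactSupport.smul_right (f' := f))
  have hnorm : ‖x‖ ≤ M := calc
    ‖x‖ = ‖χ x • f x‖ := congrArg norm hx.symm
    _ = χ x * ‖f x‖ := by rw [norm_smul, Real.norm_of_nonneg χ.nonneg]
    _ ≤ 1 * M := by gcongr; exacts [χ.le_one, hM x]
    _ = M := one_mul M
  have hχ : χ x = 1 := χ.one_of_mem_closedBall <| by
    rw [mem_closedBall_zero_iff]
    exact hnorm.trans (le_add_of_nonneg_right zero_le_one)
  exact ⟨x, by simpa [Function.IsFixedPt, hχ] using hx⟩

theorem exists_lipschitzWith_one_convexProjection {s : Set E} (hne : s.Nonempty)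
    (hs : IsComplete s) (hconv : Convex ℝ s) :
    ∃ proj : E → E, LipschitzWith 1 proj ∧
      ∀ x, proj x ∈ s ∧ ∀ y ∈ s, inner ℝ (x - proj x) (y - proj x) ≤ 0 := by
  choose proj hmem hmin using exists_norm_eq_iInf_of_complete_convex hne hs hconv
  have hvar : ∀ x, ∀ y ∈ s, inner ℝ (x - proj x) (y - proj x) ≤ 0 := fun x =>
    (norm_eq_iInf_iff_real_inner_le_zero hconv (hmem x)).1 (hmin x)
  refine ⟨proj, LipschitzWith.of_dist_le_mul fun x y => ?_, fun x => ⟨hmem x, hvar x⟩⟩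
  have hsq : ‖proj x - proj y‖ ^ 2 ≤ ‖x - y‖ * ‖proj x - proj y‖ := calc
    ‖proj x - proj y‖ ^ 2 = inner ℝ (x - y) (proj x - proj y)
        + inner ℝ (x - proj x) (proj y - proj x) + inner ℝ (y - proj y) (proj x - proj y) := by
      rw [← real_inner_self_eq_norm_sq]
      simp only [inner_sub_left, inner_sub_right]
      ring
    _ ≤ inner ℝ (x - y) (proj x - proj y) := by
      linarith [hvar x (proj y) (hmem y), hvar y (proj x) (hmem x)]
    _ ≤ ‖x - y‖ * ‖proj x - proj y‖ := real_inner_le_norm _ _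
  rw [dist_eq_norm, dist_eq_norm, NNReal.coe_one, one_mul]
  by_contra! hlt
  nlinarith [norm_nonneg (x - y)]

theorem exists_isFixedPt_of_isCompact_convex [FiniteDimensional ℝ E] {s : Set E} {f : E → E}
    (hne : s.Nonempty) (hs : IsCompact s) (hconv : Convex ℝ s) (hf : ContinuousOn f s)
    (hmaps : Set.MapsTo f s s) : ∃ x ∈ s, Function.IsFixedPt f x := by
  obtain ⟨proj, hlip, hproj⟩ := exists_lipschitzWith_one_convexProjection hne hs.isComplete hconv
  obtain ⟨M, hM⟩ := hs.isBounded.exists_norm_le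
  obtain ⟨x, hx⟩ := exists_isFixedPt_of_continuous_of_norm_le
    (hf.comp_continuous hlip.continuous fun x => (hproj x).1) fun x => hM _ (hmaps (hproj x).1)
  have hxs : x ∈ s := hx.eq ▸ hmaps (hproj x).1
  have hfix : proj x = x := by
    have hle := (hproj x).2 x hxs
    rw [real_inner_self_eq_norm_sq] at hle
    exact (sub_eq_zero.1 (norm_eq_zero.1 (by nlinarith [norm_nonneg (x - proj x)]))).symm
  exact ⟨x, hxs, by simpa [Function.IsFixedPt, hfix] using hx⟩

theorem exists_forall_inner_sub_nonpos [FiniteDimensional ℝ E] {s : Set E} {F : E → E}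
    (hne : s.Nonempty) (hs : IsCompact s) (hconv : Convex ℝ s) (hF : ContinuousOn F s) :
    ∃ x ∈ s, ∀ y ∈ s, inner ℝ (F x) (y - x) ≤ 0 := by
  obtain ⟨proj, hlip, hproj⟩ := exists_lipschitzWith_one_convexProjection hne hs.isComplete hconv
  obtain ⟨x, hxs, hx⟩ := exists_isFixedPt_of_isCompact_convex hne hs hconv
    (hlip.continuous.comp_continuousOn (continuousOn_id.add hF)) fun x _ => (hproj _).1
  have hfix : proj (x + F x) = x := hx
  exact ⟨x, hxs, fun y hy => by simpa [hfix] using (hproj (x + F x)).2 y hy⟩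

theorem exists_forall_mul_sub_nonpos_of_continuousOn_Icc {ι : Type*} [Finite ι] {a b : ι → ℝ}
    (hab : a ≤ b) {g : (ι → ℝ) → ι → ℝ} (hg : ContinuousOn g (Set.Icc a b)) :
    ∃ p ∈ Set.Icc a b, ∀ k, ∀ x ∈ Set.Icc (a k) (b k), g p k * (x - p k) ≤ 0 := by
  classical
  have := Fintype.ofFinite ι
  let e := EuclideanSpace.equiv ι ℝ
  obtain ⟨q, hq, hvar⟩ := exists_forall_inner_sub_nonpos (s := e ⁻¹' Set.Icc a b)
    (F := e.symm ∘ g ∘ e) ⟨e.symm a, by simpa using hab⟩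
    (e.toHomeomorph.isCompact_preimage.2 isCompact_Icc)
    ((convex_Icc a b).linear_preimage e.toLinearMap)
    (e.symm.continuous.comp_continuousOn
      (hg.comp e.continuous.continuousOn (Set.mapsTo_preimage e _)))
  refine ⟨e q, hq, fun k x hx => ?_⟩
  have hmem : Function.update (e q) k x ∈ Set.Icc a b :=
    ⟨le_update_iff.2 ⟨hx.1, fun j _ => hq.1 j⟩, update_le_iff.2 ⟨hx.2, fun j _ => hq.2 j⟩⟩
  have hsum := hvar (e.symm (Function.update (e q) k x)) (by simpa using hmem)
  rw [PiLp.inner_apply, Finset.sum_eq_single_of_mem k (mem_univ k)] at hsum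
  · simpa [e, mul_comm] using hsum
  · intro j _ hjk
    simp [e, Function.update_of_ne hjk]

end FixedPoint

section Game

theorem div_sub_mul_le_of_le_add_mul_sub {φ : ℝ → ℝ} {d a c x q : ℝ} (hx : 0 < x + a)
    (hq : 0 < q + a) (hc : 0 ≤ c) (htangent : φ x ≤ φ q + d * (x - q))
    (hmarginal : (d * (q + a) - φ q - c * (q + a) ^ 2) * (x - q) ≤ 0) :
    φ x / (x + a) - c * x ≤ φ q / (q + a) - c * q := by
  have hbound : φ x / (x + a) ≤ (φ q + d * (x - q)) / (x + a) := by gcongr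
  have hgap : (φ q + d * (x - q)) / (x + a) - c * x - (φ q / (q + a) - c * q) =
      ((d * (q + a) - φ q - c * (q + a) ^ 2) * (x - q) - c * (q + a) * (x - q) ^ 2)
        / ((x + a) * (q + a)) := by
    field_simp
    ring
  have hgap_nonpos : ((d * (q + a) - φ q - c * (q + a) ^ 2) * (x - q)
      - c * (q + a) * (x - q) ^ 2) / ((x + a) * (q + a)) ≤ 0 := by
    have : 0 ≤ c * (q + a) * (x - q) ^ 2 := by positivity
    exact div_nonpos_of_nonpos_of_nonneg (by linarith) (by positivity)
  linarith

theorem log_one_add_mul_div_le {h I q x : ℝ} (hI : 0 < I) (hh : 0 ≤ h) (hq : 0 ≤ q)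
    (hx : 0 ≤ x) :
    log (1 + h * x / I) ≤ log (1 + h * q / I) + h / (I + h * q) * (x - q) := by
  have hIq : 0 < I + h * q := by positivity
  have hposx : 0 < 1 + h * x / I := by positivity
  have hposq : 0 < 1 + h * q / I := by positivity
  have hlog := log_le_sub_one_of_pos (div_pos hposx hposq)
  have hratio : (1 + h * x / I) / (1 + h * q / I) - 1 = h / (I + h * q) * (x - q) := by
    field_simp [hIq.ne']
    ring
  rw [log_div hposx.ne' hposq.ne', hratio] at hlog
  linarith

variable {K : ℕ}

/-- The noise plus interference at the receiver of FU `k`: the denominator of `sinr`. -/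
def interference (hff : Fin K → Fin K → ℝ) (h0f N : Fin K → ℝ) (p0 : ℝ) (k : Fin K)
    (p : Fin K → ℝ) : ℝ :=
  N k + h0f k * p0 + ∑ j ∈ univ.erase k, hff j k * p j

/-- The marginal net payoff of FU `k`: the derivative of `payoff` in the user's own power `p k`,
multiplied by the positive factor `(p k + pa) ^ 2` to clear denominators. -/
noncomputable def marginalPayoff (W pa p0 : ℝ) (hff : Fin K → Fin K → ℝ) (h0f hf0 N : Fin K → ℝ)
    (lam p : Fin K → ℝ) (k : Fin K) : ℝ :=
  W * (hff k k / (interference hff h0f N p0 k p + hff k k * p k)) * (p k + pa)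
    - W * log (1 + sinr hff h0f N p0 k p) - lam k * hf0 k * (p k + pa) ^ 2

variable {W pa p0 : ℝ} {hff : Fin K → Fin K → ℝ} {h0f hf0 N : Fin K → ℝ}

theorem interference_pos {p : Fin K → ℝ} {k : Fin K} (hhff : ∀ j, 0 ≤ hff j k)
    (hh0f : 0 ≤ h0f k) (hp0 : 0 ≤ p0) (hN : 0 < N k) (hp : 0 ≤ p) :
    0 < interference hff h0f N p0 k p :=
  add_pos_of_pos_of_nonneg (add_pos_of_pos_of_nonneg hN (mul_nonneg hh0f hp0))
    (sum_nonneg fun j _ => mul_nonneg (hhff j) (hp j))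

theorem continuous_interference (k : Fin K) : Continuous (interference hff h0f N p0 k) := by
  unfold interference
  fun_prop

theorem interference_update (p : Fin K → ℝ) (k : Fin K) (x : ℝ) :
    interference hff h0f N p0 k (Function.update p k x) = interference hff h0f N p0 k p := by
  unfold interference
  congr 1
  exact sum_congr rfl fun j hj => by rw [Function.update_of_ne (ne_of_mem_erase hj)]

theorem payoff_update (lam p : Fin K → ℝ) (k : Fin K) (x : ℝ) :
    payoff W pa p0 hff h0f hf0 N lam k (Function.update p k x) =
      W * log (1 + hff k k * x / interference hff h0f N p0 k p) / (x + pa)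
        - lam k * hf0 k * x := by
  rw [← interference_update p k x]
  simp only [payoff, sinr, interference, Function.update_self]

theorem continuousOn_marginalPayoff {s : Set (Fin K → ℝ)} (hs : ∀ p ∈ s, 0 ≤ p)
    (hhff : ∀ j k, 0 ≤ hff j k) (hh0f : 0 ≤ h0f) (hp0 : 0 ≤ p0) (hN : ∀ k, 0 < N k)
    (lam : Fin K → ℝ) : ContinuousOn (marginalPayoff W pa p0 hff h0f hf0 N lam) s := by
  refine continuousOn_pi.2 fun k => ?_
  have hI : ∀ p ∈ s, 0 < interference hff h0f N p0 k p := fun p hp =>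
    interference_pos (fun j => hhff j k) (hh0f k) hp0 (hN k) (hs p hp)
  have hsignal : ∀ p ∈ s, 0 ≤ hff k k * p k := fun p hp => mul_nonneg (hhff k k) (hs p hp k)
  have hcont := (continuous_interference (hff := hff) (h0f := h0f) (N := N) (p0 := p0)
    k).continuousOn (s := s)
  have hsinr : ContinuousOn (sinr hff h0f N p0 k) s :=
    ContinuousOn.div (by fun_prop) hcont fun p hp => (hI p hp).ne'
  have hlog : ContinuousOn (fun p => log (1 + sinr hff h0f N p0 k p)) s :=
    (continuousOn_const.add hsinr).log fun p hp =>
      (add_pos_of_pos_of_nonneg one_pos (div_nonneg (hsignal p hp) (hI p hp).le)).ne'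
  have hslope : ContinuousOn
      (fun p => hff k k / (interference hff h0f N p0 k p + hff k k * p k)) s :=
    continuousOn_const.div (by fun_prop) fun p hp =>
      (add_pos_of_pos_of_nonneg (hI p hp) (hsignal p hp)).ne'
  unfold marginalPayoff
  fun_prop

theorem payoff_update_le_of_marginalPayoff_mul_nonpos {lam p : Fin K → ℝ} {k : Fin K} {x : ℝ}
    (hW : 0 ≤ W) (hpa : 0 < pa) (hI : 0 < interference hff h0f N p0 k p) (hhff : 0 ≤ hff k k)
    (hprice : 0 ≤ lam k * hf0 k) (hp : 0 ≤ p k) (hx : 0 ≤ x)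
    (hmarginal : marginalPayoff W pa p0 hff h0f hf0 N lam p k * (x - p k) ≤ 0) :
    payoff W pa p0 hff h0f hf0 N lam k (Function.update p k x) ≤
      payoff W pa p0 hff h0f hf0 N lam k p := by
  have htangent := mul_le_mul_of_nonneg_left (log_one_add_mul_div_le hI hhff hp hx) hW
  rw [mul_add, ← mul_assoc] at htangent
  rw [payoff_update]
  exact div_sub_mul_le_of_le_add_mul_sub
    (φ := fun y => W * log (1 + hff k k * y / interference hff h0f N p0 k p))
    (by positivity) (by positivity) hprice htangent hmarginal

theorem exists_nash_equilibrium_of_prices {pmax : Fin K → ℝ} (hW : 0 ≤ W) (hpa : 0 < pa)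
    (hp0 : 0 ≤ p0) (hhff : ∀ j k, 0 ≤ hff j k) (hh0f : 0 ≤ h0f) (hhf0 : 0 ≤ hf0)
    (hN : ∀ k, 0 < N k) (hpmax : 0 ≤ pmax) {lam : Fin K → ℝ} (hlam : 0 ≤ lam) :
    ∃ p ∈ Set.Icc 0 pmax, ∀ k, ∀ x ∈ Set.Icc 0 (pmax k),
      payoff W pa p0 hff h0f hf0 N lam k (Function.update p k x) ≤
        payoff W pa p0 hff h0f hf0 N lam k p := by
  obtain ⟨p, hp, hvar⟩ := exists_forall_mul_sub_nonpos_of_continuousOn_Icc hpmax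
    (continuousOn_marginalPayoff (W := W) (pa := pa) (hf0 := hf0) (fun _ hp => hp.1)
      hhff hh0f hp0 hN lam)
  exact ⟨p, hp, fun k x hx => payoff_update_le_of_marginalPayoff_mul_nonpos hW hpa
    (interference_pos (fun j => hhff j k) (hh0f k) hp0 (hN k) hp.1) (hhff k k)
    (mul_nonneg (hlam k) (hhf0 k)) (hp.1 k) hx.1 (hvar k x hx)⟩

theorem revenue_mono_left {lam lam' p : Fin K → ℝ} (hhf0 : 0 ≤ hf0) (hp : 0 ≤ p)
    (hlam : lam ≤ lam') : revenue hf0 lam p ≤ revenue hf0 lam' p :=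
  sum_le_sum fun k _ => mul_le_mul_of_nonneg_right
    (mul_le_mul_of_nonneg_right (hlam k) (hhf0 k)) (hp k)

end Game

/-- Existence part of Theorem 3 (with the MBS price restricted to a compact box):
the simultaneous-move Stackelberg game between MBS and FUs has a pure-strategy
equilibrium with finite prices. -/
theorem stackelberg_pure_equilibrium_exists {K : ℕ} (hK : 1 ≤ K)
    (W pa p0 : ℝ) (hW : 0 < W) (hpa : 0 < pa) (hp0 : 0 ≤ p0)
    (hff : Fin K → Fin K → ℝ) (h0f hf0 N pmax : Fin K → ℝ)
    (hhff : ∀ i j, 0 < hff i j) (hh0f : ∀ i, 0 < h0f i) (hhf0 : ∀ i, 0 < hf0 i)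
    (hN : ∀ i, 0 < N i) (hpmax : ∀ i, 0 < pmax i)
    (lambar : ℝ) (hlambar : 0 < lambar) :
    ∃ (lamstar pstar : Fin K → ℝ),
      (∀ k, lamstar k ∈ Set.Icc (0:ℝ) lambar) ∧
      (∀ k, pstar k ∈ Set.Icc (0:ℝ) (pmax k)) ∧
      (∀ lam : Fin K → ℝ, (∀ k, lam k ∈ Set.Icc (0:ℝ) lambar) →
        revenue hf0 lam pstar ≤ revenue hf0 lamstar pstar) ∧
      (∀ k : Fin K, ∀ x ∈ Set.Icc (0:ℝ) (pmax k),
        payoff W pa p0 hff h0f hf0 N lamstar k (Function.update pstar k x) ≤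
          payoff W pa p0 hff h0f hf0 N lamstar k pstar) := by
  have hhf0_nonneg : 0 ≤ hf0 := fun k => (hhf0 k).le
  obtain ⟨p, hp, hnash⟩ := exists_nash_equilibrium_of_prices hW.le hpa hp0
    (fun j k => (hhff j k).le) (fun k => (hh0f k).le) hhf0_nonneg hN (fun k => (hpmax k).le)
    (lam := fun _ => lambar) fun _ => hlambar.le
  exact ⟨fun _ => lambar, p, fun _ => ⟨hlambar.le, le_rfl⟩, fun k => ⟨hp.1 k, hp.2 k⟩,
    fun lam hlam => revenue_mono_left hhf0_nonneg hp.1 fun k => (hlam k).2, hnash⟩
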